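/- Let H be a symmetric positive definite n×n real matrix, E a real m×n matrix with full row rank m, and let 0 < α < 1/max{‖E‖₂, ‖EH^{−1/2}‖₂² + ‖H‖₂/4}. Then the symmetric block matrix Q = [[H − αEᵀE, (α/2)HEᵀ],[(α/2)EH, αEEᵀ]] is positive definite. (Equivalently, for every δz = (δx, δν) ∈ ℝⁿ⁺ᵐ one has δzᵀQδz = δxᵀ(H − αEᵀE − (α/4)H²)δx + α‖Eᵀδν + (1/2)Hδx‖₂², which is strictly positive for δz ≠ 0.) -/

import Mathlib

open Matrix
open scoped MatrixOrder

/-- The spectral (operator 2-)norm of a real matrix. -/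
noncomputable def spectralNorm2 {m n : ℕ} (E : Matrix (Fin m) (Fin n) ℝ) : ℝ :=
  ‖LinearMap.toContinuousLinearMap (Matrix.toEuclideanLin E)‖

/-- The block matrix `Q = [[H - αEᵀE, (α/2)HEᵀ],[(α/2)EH, αEEᵀ]]`. -/
noncomputable def Qmat {n m : ℕ} (H : Matrix (Fin n) (Fin n) ℝ) (E : Matrix (Fin m) (Fin n) ℝ)
    (α : ℝ) : Matrix (Fin n ⊕ Fin m) (Fin n ⊕ Fin m) ℝ :=
  fromBlocks (H - α • (Eᵀ * E)) ((α / 2) • (H * Eᵀ)) ((α / 2) • (E * H)) (α • (E * Eᵀ))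

theorem aux_norm {m n : ℕ} (A : Matrix (Fin m) (Fin n) ℝ) (x : Fin n → ℝ) :
    (A *ᵥ x) ⬝ᵥ (A *ᵥ x) ≤ spectralNorm2 A ^ 2 * (x ⬝ᵥ x) := by
  have h := (LinearMap.toContinuousLinearMap (Matrix.toEuclideanLin A)).le_opNorm (WithLp.toLp 2 x)
  have h2 := pow_le_pow_left₀ (norm_nonneg _) h 2
  rw [mul_pow, EuclideanSpace.real_norm_sq_eq, EuclideanSpace.real_norm_sq_eq] at h2
  simpa [spectralNorm2, dotProduct, pow_two] using h2

theorem aux_inner {n : ℕ} (A : Matrix (Fin n) (Fin n) ℝ) (x : Fin n → ℝ) :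
    x ⬝ᵥ (A *ᵥ x) ≤ spectralNorm2 A * (x ⬝ᵥ x) := by
  have h := (LinearMap.toContinuousLinearMap (Matrix.toEuclideanLin A)).le_opNorm (WithLp.toLp 2 x)
  have h1 := real_inner_le_norm (WithLp.toLp 2 x)
    ((LinearMap.toContinuousLinearMap (Matrix.toEuclideanLin A)) (WithLp.toLp 2 x))
  have h3 : ‖WithLp.toLp 2 x‖ ^ 2 = x ⬝ᵥ x := by
    rw [EuclideanSpace.real_norm_sq_eq]; simp [dotProduct, pow_two]
  have h4 : inner ℝ (WithLp.toLp 2 x)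
    ((LinearMap.toContinuousLinearMap (Matrix.toEuclideanLin A)) (WithLp.toLp 2 x)) =
      x ⬝ᵥ (A *ᵥ x) := by
    simp [EuclideanSpace.inner_eq_star_dotProduct, dotProduct_comm]
  rw [h4] at h1
  rw [← h3]
  unfold spectralNorm2
  nlinarith [norm_nonneg (WithLp.toLp 2 x)]

theorem aux_quad {n m : ℕ} (H : Matrix (Fin n) (Fin n) ℝ) (hs : Hᵀ = H)
    (E : Matrix (Fin m) (Fin n) ℝ) (α : ℝ) (x : Fin n → ℝ) (v : Fin m → ℝ) :
      Sum.elim x v ⬝ᵥ (Qmat H E α *ᵥ Sum.elim x v) =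
        x ⬝ᵥ ((H - α • (Eᵀ * E) - (α / 4) • (H * H)) *ᵥ x) +
          α * ((Eᵀ *ᵥ v + (1 / 2 : ℝ) • (H *ᵥ x)) ⬝ᵥ
                (Eᵀ *ᵥ v + (1 / 2 : ℝ) • (H *ᵥ x))) := by
  have e1 : v ⬝ᵥ (E *ᵥ (Eᵀ *ᵥ v)) = (Eᵀ *ᵥ v) ⬝ᵥ (Eᵀ *ᵥ v) := by
    rw [dotProduct_mulVec, ← mulVec_transpose]
  have e2 : v ⬝ᵥ (E *ᵥ (H *ᵥ x)) = (Eᵀ *ᵥ v) ⬝ᵥ (H *ᵥ x) := by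
    rw [dotProduct_mulVec, ← mulVec_transpose]
  have e3 : ∀ y, x ⬝ᵥ (H *ᵥ y) = (H *ᵥ x) ⬝ᵥ y := by
    intro y
    rw [dotProduct_mulVec, ← mulVec_transpose, hs]
  have e4 := dotProduct_comm (H *ᵥ x) (Eᵀ *ᵥ v)
  simp only [Qmat, fromBlocks_mulVec, Sum.elim_comp_inl, Sum.elim_comp_inr, sumElim_dotProduct_sumElim,
    sub_mulVec, smul_mulVec, ← mulVec_mulVec, dotProduct_add, add_dotProduct, dotProduct_sub,
    dotProduct_smul, smul_dotProduct, smul_eq_mul, e1, e2]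
  rw [e3 (Eᵀ *ᵥ v), e3 (H *ᵥ x), e4]
  ring

theorem aux_pos {n m : ℕ} (H : Matrix (Fin n) (Fin n) ℝ) (hH : H.PosDef)
    (E : Matrix (Fin m) (Fin n) ℝ) (α : ℝ) (hα0 : 0 < α)
    (hα : α * (spectralNorm2 (E * (CFC.sqrt H)⁻¹) ^ 2 + spectralNorm2 H / 4) < 1)
    (x : Fin n → ℝ) (hx : x ≠ 0) :
    0 < x ⬝ᵥ ((H - α • (Eᵀ * E) - (α / 4) • (H * H)) *ᵥ x) := by
  have hH0 : 0 ≤ H := Matrix.nonneg_iff_posSemidef.2 hH.posSemidef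
  have hSS : CFC.sqrt H * CFC.sqrt H = H := CFC.sqrt_mul_sqrt_self H hH0
  have hST : (CFC.sqrt H)ᵀ = CFC.sqrt H := by
    have := (Matrix.nonneg_iff_posSemidef.1 (CFC.sqrt_nonneg H)).isHermitian
    simpa [IsHermitian] using this
  generalize CFC.sqrt H = S at *
  have hdet : IsUnit S.det := by
    have := hH.det_pos
    rw [← hSS, det_mul] at this
    exact isUnit_iff_ne_zero.2 (by rintro h; simp [h] at this)
  have hHT : Hᵀ = H := by rw [← hSS, transpose_mul, hST]
  have e3 : ∀ a b, a ⬝ᵥ (S *ᵥ b) = (S *ᵥ a) ⬝ᵥ b := by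
    intro a b
    rw [dotProduct_mulVec, ← mulVec_transpose, hST]
  have q1 : x ⬝ᵥ (H *ᵥ x) = (S *ᵥ x) ⬝ᵥ (S *ᵥ x) := by
    rw [← hSS, ← mulVec_mulVec, e3]
  have q2 : x ⬝ᵥ (H *ᵥ (H *ᵥ x)) = (S *ᵥ x) ⬝ᵥ (H *ᵥ (S *ᵥ x)) := by
    rw [← e3]; simp only [← hSS, mulVec_mulVec, Matrix.mul_assoc]
  have q3 : x ⬝ᵥ (Eᵀ *ᵥ (E *ᵥ x)) = ((E * S⁻¹) *ᵥ (S *ᵥ x)) ⬝ᵥ ((E * S⁻¹) *ᵥ (S *ᵥ x)) := by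
    rw [mulVec_mulVec x (E * S⁻¹) S, nonsing_inv_mul_cancel_right _ _ hdet, dotProduct_mulVec, vecMul_transpose]
  have hp : 0 < x ⬝ᵥ (H *ᵥ x) := by simpa using hH.dotProduct_mulVec_pos hx
  have b1 := aux_norm (E * S⁻¹) (S *ᵥ x)
  have b2 := aux_inner H (S *ᵥ x)
  simp only [sub_mulVec, smul_mulVec, ← mulVec_mulVec, dotProduct_sub, dotProduct_smul, smul_eq_mul]
  rw [q1] at hp
  rw [q1, q2, q3]
  have c1 := mul_le_mul_of_nonneg_left b1 hα0.le
  have c2 := mul_le_mul_of_nonneg_left b2 hα0.le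
  have c3 := mul_lt_mul_of_pos_right hα hp
  linarith

/-- For `H` symmetric positive definite, `E` of full row rank `m`, and
`0 < α < 1/max{‖E‖₂, ‖EH^{-1/2}‖₂² + ‖H‖₂/4}`, the symmetric block matrix
`Q = [[H - αEᵀE, (α/2)HEᵀ],[(α/2)EH, αEEᵀ]]` is positive definite; equivalently, its
quadratic form decomposes as
`δzᵀQδz = δxᵀ(H - αEᵀE - (α/4)H²)δx + α‖Eᵀδν + (1/2)Hδx‖₂²`. -/
theorem stmt4 {n m : ℕ} (H : Matrix (Fin n) (Fin n) ℝ) (hH : H.PosDef)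
    (E : Matrix (Fin m) (Fin n) ℝ) (hrank : E.rank = m) (α : ℝ) (hα0 : 0 < α)
    (hα : α < 1 / max (spectralNorm2 E)
        (spectralNorm2 (E * (CFC.sqrt H)⁻¹) ^ 2 + spectralNorm2 H / 4)) :
    (Qmat H E α).PosDef ∧
    ∀ (δx : Fin n → ℝ) (δν : Fin m → ℝ),
      Sum.elim δx δν ⬝ᵥ (Qmat H E α *ᵥ Sum.elim δx δν) =
        δx ⬝ᵥ ((H - α • (Eᵀ * E) - (α / 4) • (H * H)) *ᵥ δx) +
          α * ((Eᵀ *ᵥ δν + (1 / 2 : ℝ) • (H *ᵥ δx)) ⬝ᵥ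
                (Eᵀ *ᵥ δν + (1 / 2 : ℝ) • (H *ᵥ δx))) := by
  have hHT : Hᵀ = H := by simpa [IsHermitian] using hH.isHermitian
  have hq := aux_quad H hHT E α
  refine ⟨?_, hq⟩
  have hM : α * (spectralNorm2 (E * (CFC.sqrt H)⁻¹) ^ 2 + spectralNorm2 H / 4) < 1 := by
    have hMpos := one_div_pos.1 (hα0.trans hα)
    have h1 := (lt_div_iff₀ hMpos).1 hα
    exact (mul_le_mul_of_nonneg_left (le_max_right _ _) hα0.le).trans_lt h1
  have hEinj : ∀ v, Eᵀ *ᵥ v = 0 → v = 0 := by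
    have hli : LinearIndependent ℝ E.row := by
      rw [linearIndependent_iff_card_eq_finrank_span, Set.finrank, ← Matrix.rank_eq_finrank_span_row, hrank]
      simp
    intro v hv
    have hinj := Matrix.vecMul_injective_iff.2 hli
    apply hinj
    simpa [mulVec_transpose] using hv
  apply Matrix.PosDef.of_dotProduct_mulVec_pos
  · simp [IsHermitian, Qmat, fromBlocks_transpose, hHT]
  · intro z hz
    obtain ⟨x, v, rfl⟩ : ∃ x v, z = Sum.elim x v := ⟨z ∘ Sum.inl, z ∘ Sum.inr, by simp⟩
    simp only [star_trivial]
    rw [hq]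
    by_cases hx : x = 0
    · subst hx
      have hv : Eᵀ *ᵥ v ≠ 0 := fun h => hz (by rw [hEinj v h]; ext i; cases i <;> rfl)
      have : 0 < (Eᵀ *ᵥ v) ⬝ᵥ (Eᵀ *ᵥ v) := by
        simpa using Matrix.dotProduct_star_self_pos_iff.2 hv
      simp only [mulVec_zero, smul_zero, add_zero, dotProduct_zero, zero_add]
      positivity
    · have h1 := aux_pos H hH E α hα0 hM x hx
      have h2 : 0 ≤ (Eᵀ *ᵥ v + (1 / 2 : ℝ) • (H *ᵥ x)) ⬝ᵥ (Eᵀ *ᵥ v + (1 / 2 : ℝ) • (H *ᵥ x)) := by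
        exact Finset.sum_nonneg fun i _ => mul_self_nonneg _
      positivity
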